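/- arXiv:2205.07223 — 3 statements merged into one kernel-verified Lean document; each statement's English description precedes it below -/
import Mathlib

section
/- Under the wide-range Hedge setup, suppose the sequence (p^t)_{t=1}^T is consistent with wide-range Hedge, i.e. for every t ∈ {1,…,T} the stationarity equation ∑_{(b,ψ)∈ℐ} w^{t−1}(b,ψ)·S^t_b·p^t = ∑_{(b,ψ)∈ℐ} w^{t−1}(b,ψ)·S^t_b·(ψ∘p^t) holds as an equality of vectors in ℝ^A. Then for every b ∈ B^e and every action a ∈ 𝒜 (equivalently every constant map ψ ∈ Ψ^e, for which ⟨ψ∘p, ℓ⟩ = ℓ(a)), ∑_{t=1}^T S^t_b·(⟨p^t, ℓ^t⟩ − ℓ^t(a)) ≤ η·∑_{t=1}^T ‖ℓ^t‖_∞·S^t_b·⟨p^t, ℓ^t⟩ + log((|B^s| + |B^e|)·A)/η. -/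
/-!
The proof is the usual potential argument. Let `W t` be the total weight `∑ w t` over `ℐ`. Convexity
of `exp` on `[0, ‖ℓ‖_∞]` bounds one multiplicative weight update by
`1 + c S (⟨p, ℓ⟩ - ⟨ψ∘p, ℓ⟩)`, where `c ≥ 0` depends only on `η` and `‖ℓ‖_∞` (`exp_update_le`; the
discount `exp (-η ‖ℓ‖_∞)` is what makes the two chord slopes agree). After averaging with the
weights, the stationarity equation cancels the linear term, so `W T ≤ W 0`. The prior is chosen so
that `W 0 = (|Bs| + |Be|) A · A ^ A`, while every external expert starts with weight `A ^ A`.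
Comparing a single external weight with `W 0`, taking logarithms and using
`1 - exp (-η ‖ℓ‖_∞) ≤ η ‖ℓ‖_∞` gives the bound.
-/

open Finset

/-- Pushforward of a vector `p` on `Fin A` under a map `ψ : Fin A → Fin A`:
`(ψ∘p)(a) = ∑_{a' : ψ(a') = a} p(a')`. -/
def pushf {A : ℕ} (ψ : Fin A → Fin A) (p : Fin A → ℝ) : Fin A → ℝ :=
  fun a => ∑ a' ∈ Finset.univ.filter (fun a' => ψ a' = a), p a'

/-- Standard inner product on `ℝ^A`. -/
def ip {A : ℕ} (p ℓ : Fin A → ℝ) : ℝ := ∑ a, p a * ℓ a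

/-- Sup norm `‖ℓ‖_∞ = max_a ℓ(a)` (for nonempty `Fin A`). -/
noncomputable def supNorm {A : ℕ} (ℓ : Fin A → ℝ) : ℝ := sSup (Set.range ℓ)

/-- The set `Ψ^e` of external (constant) modifications on `Fin A`. -/
def PsiE (A : ℕ) : Finset (Fin A → Fin A) :=
  Finset.univ.image fun a => Function.const (Fin A) a

/-- On `[0, L]` the convex function `u ↦ exp (k u)` lies below its chord. For `L = 0` the slope is
the junk value `0`, and the bound still holds since then `u = 0`. -/
lemma exp_le_chord (k L u : ℝ) (hu : 0 ≤ u) (huL : u ≤ L) :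
    Real.exp (k * u) ≤ 1 + (Real.exp (k * L) - 1) / L * u := by
  rcases (hu.trans huL).eq_or_lt with h | h
  · have : u = 0 := by linarith
    simp [this]
  · have := convexOn_exp.2 (Set.mem_univ 0) (Set.mem_univ (k * L))
      (sub_nonneg.2 ((div_le_one h).2 huL)) (div_nonneg hu h.le) (by ring : 1 - u / L + u / L = 1)
    simp only [smul_eq_mul, mul_zero, zero_add, Real.exp_zero, mul_one] at this
    have e : u / L * (k * L) = k * u := by field_simp
    rw [e] at this
    calc _ ≤ _ := this
      _ = _ := by ring

/-- One weight update is bounded by an affine function of the instantaneous regret `x - y`, with a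
slope that is the same for all experts. -/
lemma exp_update_le (η L x y s : ℝ) (hη : 0 < η) (hx : 0 ≤ x) (hxL : x ≤ L) (hy : 0 ≤ y)
    (hyL : y ≤ L) (hs : 0 ≤ s) (hs1 : s ≤ 1) :
    Real.exp (η * (Real.exp (-η * L) * s * x - s * y))
      ≤ 1 + (1 - Real.exp (-η * L)) / L * (s * (x - y)) := by
  have hL : 0 ≤ L := hx.trans hxL
  set β := Real.exp (-η * L) with hβ
  have hβ0 : 0 < β := Real.exp_pos _
  have hβ1 : β ≤ 1 := Real.exp_le_one_iff.2 (by nlinarith)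
  have hsx : s * x ≤ L := by nlinarith
  have hsy : s * y ≤ L := by nlinarith
  have hsx0 : 0 ≤ s * x := mul_nonneg hs hx
  have hsy0 : 0 ≤ s * y := mul_nonneg hs hy
  have h1 := exp_le_chord η L (β * (s * x)) (by positivity) (by nlinarith)
  have h2 := exp_le_chord (-η) L (s * y) hsy0 hsy
  have e1 : Real.exp (η * L) * β = 1 := by
    rw [hβ, ← Real.exp_add]; simp
  have e2 : (Real.exp (η * L) - 1) / L * (β * (s * x)) = (1 - β) / L * (s * x) := by
    calc _ = (Real.exp (η * L) * β - β) / L * (s * x) := by ring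
      _ = _ := by rw [e1]
  rw [e2] at h1
  rw [← hβ] at h2
  have hc : 0 ≤ (1 - β) / L := div_nonneg (by linarith) hL
  set c := (1 - β) / L with hcdef
  have e3 : (β - 1) / L * (s * y) = -(c * (s * y)) := by rw [hcdef]; ring
  rw [e3] at h2
  have e4 : η * (β * s * x - s * y) = η * (β * (s * x)) + -η * (s * y) := by ring
  rw [e4, Real.exp_add]
  calc _ ≤ (1 + c * (s * x)) * (1 + -(c * (s * y))) :=
        mul_le_mul h1 h2 (Real.exp_pos _).le (by positivity)
    _ ≤ _ := by nlinarith [mul_nonneg (mul_nonneg hc hsx0) (mul_nonneg hc hsy0)]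

lemma le_supNorm {A : ℕ} (ℓ : Fin A → ℝ) (a : Fin A) : ℓ a ≤ supNorm ℓ :=
  le_csSup (Set.finite_range ℓ).bddAbove ⟨a, rfl⟩

lemma ip_pushf {A : ℕ} (ψ : Fin A → Fin A) (p ℓ : Fin A → ℝ) :
    ip (pushf ψ p) ℓ = ∑ a, p a * ℓ (ψ a) := by
  unfold ip pushf
  rw [← Finset.sum_fiberwise Finset.univ ψ (fun a => p a * ℓ (ψ a))]
  refine Finset.sum_congr rfl fun a _ => ?_
  rw [Finset.sum_mul]
  refine Finset.sum_congr rfl fun a' ha' => ?_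
  rw [(Finset.mem_filter.1 ha').2]

/-- An average of losses, possibly relabelled by `ψ`, lies in `[0, ‖ℓ‖_∞]`. -/
lemma avg_mem {A : ℕ} (ψ : Fin A → Fin A) (p ℓ : Fin A → ℝ) (hp : ∀ a, 0 ≤ p a)
    (hp1 : ∑ a, p a = 1) (hℓ : ∀ a, 0 ≤ ℓ a) :
    0 ≤ ∑ a, p a * ℓ (ψ a) ∧ ∑ a, p a * ℓ (ψ a) ≤ supNorm ℓ := by
  refine ⟨Finset.sum_nonneg fun a _ => mul_nonneg (hp a) (hℓ _), ?_⟩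
  calc _ ≤ ∑ a, p a * supNorm ℓ :=
        Finset.sum_le_sum fun a _ => mul_le_mul_of_nonneg_left (le_supNorm ℓ _) (hp a)
    _ = _ := by rw [← Finset.sum_mul, hp1, one_mul]

lemma card_PsiE {A : ℕ} (hA : 1 ≤ A) : (PsiE A).card = A := by
  unfold PsiE
  rw [Finset.card_image_of_injective, Finset.card_univ, Fintype.card_fin]
  intro a b h
  exact congrFun h ⟨0, hA⟩

/-- Wide-range regret bound of wide-range Hedge, external part: if the play `(p^t)`
satisfies the stationarity equations of wide-range Hedge, then for every external
time-selection index `b ∈ B^e` and every action `a`,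
`∑_t S^t_b (⟨p^t, ℓ^t⟩ − ℓ^t(a))
  ≤ η ∑_t ‖ℓ^t‖_∞ S^t_b ⟨p^t, ℓ^t⟩ + log((|B^s|+|B^e|)·A)/η`. -/
theorem stmt1
    (A : ℕ) (hA : 1 ≤ A)
    (B : Type) [Fintype B] [DecidableEq B]
    (Bs Be : Finset B) (hdisj : Disjoint Bs Be)
    (hBs : Bs.Nonempty) (hBe : Be.Nonempty)
    (ℐ : Finset (B × (Fin A → Fin A)))
    (hℐ : ℐ = Bs ×ˢ (Finset.univ : Finset (Fin A → Fin A)) ∪ Be ×ˢ PsiE A)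
    (T : ℕ) (hT : 1 ≤ T)
    (S : ℕ → B → ℝ)
    (hS : ∀ t ∈ Finset.Icc 1 T, ∀ b ∈ Bs ∪ Be, 0 ≤ S t b ∧ S t b ≤ 1)
    (ℓ : ℕ → Fin A → ℝ)
    (hℓ : ∀ t ∈ Finset.Icc 1 T, ∀ a, 0 ≤ ℓ t a)
    (η : ℝ) (hη : 0 < η)
    (p : ℕ → Fin A → ℝ)
    (hp : ∀ t ∈ Finset.Icc 1 T, (∀ a, 0 ≤ p t a) ∧ ∑ a, p t a = 1)
    (w : ℕ → B × (Fin A → Fin A) → ℝ)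
    (hw : ∀ t, ∀ bψ : B × (Fin A → Fin A), w t bψ =
      (if bψ.1 ∈ Be then (A : ℝ) ^ (A : ℕ) else (A : ℝ)) *
        Real.exp (η * ∑ s ∈ Finset.Icc 1 t,
          (Real.exp (-η * supNorm (ℓ s)) * S s bψ.1 * ip (p s) (ℓ s)
            - S s bψ.1 * ip (pushf bψ.2 (p s)) (ℓ s))))
    (hstat : ∀ t ∈ Finset.Icc 1 T, ∀ a : Fin A,
      ∑ bψ ∈ ℐ, w (t - 1) bψ * S t bψ.1 * p t a
        = ∑ bψ ∈ ℐ, w (t - 1) bψ * S t bψ.1 * pushf bψ.2 (p t) a) :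
    ∀ b ∈ Be, ∀ a : Fin A,
      ∑ t ∈ Finset.Icc 1 T, S t b * (ip (p t) (ℓ t) - ℓ t a)
        ≤ η * ∑ t ∈ Finset.Icc 1 T, supNorm (ℓ t) * S t b * ip (p t) (ℓ t)
          + Real.log (((Bs.card : ℝ) + (Be.card : ℝ)) * (A : ℝ)) / η := by
  intro b hb a
  have hA0 : (0 : ℝ) < A := by exact_mod_cast hA
  have hwpos : ∀ t bψ, 0 < w t bψ := by
    intro t bψ
    rw [hw]
    split_ifs <;> positivity
  have hmem : ∀ bψ ∈ ℐ, bψ.1 ∈ Bs ∪ Be := by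
    intro bψ h
    rw [hℐ, Finset.mem_union, Finset.mem_product, Finset.mem_product] at h
    rw [Finset.mem_union]
    tauto
  have hstep : ∀ t, t + 1 ≤ T → ∑ bψ ∈ ℐ, w (t + 1) bψ ≤ ∑ bψ ∈ ℐ, w t bψ := by
    intro t ht
    have htm : t + 1 ∈ Finset.Icc 1 T := Finset.mem_Icc.2 ⟨by omega, ht⟩
    obtain ⟨hp0, hp1⟩ := hp _ htm
    set c := (1 - Real.exp (-η * supNorm (ℓ (t + 1)))) / supNorm (ℓ (t + 1)) with hc
    -- Pairing the stationarity equation with `ℓ` makes the weighted regrets sum to zero.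
    have hzero : ∑ bψ ∈ ℐ, w t bψ * S (t + 1) bψ.1 *
        (ip (p (t + 1)) (ℓ (t + 1)) - ip (pushf bψ.2 (p (t + 1))) (ℓ (t + 1))) = 0 := by
      have h1 : ∀ q : (Fin A → Fin A) → Fin A → ℝ,
          ∑ bψ ∈ ℐ, w t bψ * S (t + 1) bψ.1 * ip (q bψ.2) (ℓ (t + 1))
            = ∑ a, (∑ bψ ∈ ℐ, w t bψ * S (t + 1) bψ.1 * q bψ.2 a) * ℓ (t + 1) a := by
        intro q
        simp only [ip, Finset.mul_sum, Finset.sum_mul]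
        rw [Finset.sum_comm]
        simp only [mul_assoc]
      simp only [mul_sub, Finset.sum_sub_distrib]
      rw [h1 (fun _ => p (t + 1)), h1 (fun ψ => pushf ψ (p (t + 1))), sub_eq_zero]
      refine Finset.sum_congr rfl fun a _ => ?_
      have := hstat _ htm a
      rw [Nat.add_sub_cancel] at this
      rw [this]
    calc ∑ bψ ∈ ℐ, w (t + 1) bψ
        ≤ ∑ bψ ∈ ℐ, (w t bψ + c * (w t bψ * S (t + 1) bψ.1 *
        (ip (p (t + 1)) (ℓ (t + 1)) - ip (pushf bψ.2 (p (t + 1))) (ℓ (t + 1))))) := by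
          refine Finset.sum_le_sum fun bψ hbψ => ?_
          obtain ⟨hs0, hs1⟩ := hS _ htm _ (hmem _ hbψ)
          obtain ⟨hx0, hxL⟩ : 0 ≤ ip (p (t + 1)) (ℓ (t + 1)) ∧
              ip (p (t + 1)) (ℓ (t + 1)) ≤ supNorm (ℓ (t + 1)) :=
            avg_mem id _ _ hp0 hp1 (hℓ _ htm)
          obtain ⟨hy0, hyL⟩ := avg_mem bψ.2 _ _ hp0 hp1 (hℓ _ htm)
          rw [← ip_pushf] at hy0 hyL
          have hu := exp_update_le η _ _ _ _ hη hx0 hxL hy0 hyL hs0 hs1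
          have hrec : w (t + 1) bψ = w t bψ * Real.exp (η *
              (Real.exp (-η * supNorm (ℓ (t + 1))) * S (t + 1) bψ.1 * ip (p (t + 1)) (ℓ (t + 1))
              - S (t + 1) bψ.1 * ip (pushf bψ.2 (p (t + 1))) (ℓ (t + 1)))) := by
            rw [hw, hw, Finset.sum_Icc_succ_top (by omega), mul_add, Real.exp_add, ← mul_assoc]
          rw [hrec]
          calc _ ≤ _ := mul_le_mul_of_nonneg_left hu (hwpos t bψ).le
            _ = _ := by rw [hc]; ring
      _ = ∑ bψ ∈ ℐ, w t bψ := by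
          rw [Finset.sum_add_distrib, ← Finset.mul_sum, hzero, mul_zero, add_zero]
  have hmono : ∀ t, t ≤ T → ∑ bψ ∈ ℐ, w t bψ ≤ ∑ bψ ∈ ℐ, w 0 bψ := by
    intro t
    induction t with
    | zero => exact fun _ => le_rfl
    | succ t ih => exact fun h => (hstep t h).trans (ih (by omega))
  have hW0 : ∑ bψ ∈ ℐ, w 0 bψ = (((Bs.card : ℝ) + Be.card) * A) * (A : ℝ) ^ A := by
    have hd : Disjoint (Bs ×ˢ (Finset.univ : Finset (Fin A → Fin A))) (Be ×ˢ PsiE A) :=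
      Finset.disjoint_product.2 (Or.inl hdisj)
    rw [hℐ, Finset.sum_union hd]
    have hs : ∀ bψ ∈ Bs ×ˢ (Finset.univ : Finset (Fin A → Fin A)), w 0 bψ = A := by
      intro bψ h
      rw [hw, if_neg (Finset.disjoint_left.1 hdisj (Finset.mem_product.1 h).1)]
      simp
    have he : ∀ bψ ∈ Be ×ˢ PsiE A, w 0 bψ = (A : ℝ) ^ A := by
      intro bψ h
      rw [hw, if_pos (Finset.mem_product.1 h).1]
      simp
    rw [Finset.sum_congr rfl hs, Finset.sum_congr rfl he]
    simp only [Finset.sum_const, Finset.card_product, card_PsiE hA, Finset.card_univ,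
      Fintype.card_fun, Fintype.card_fin, nsmul_eq_mul]
    push_cast
    ring
  have hin : (b, Function.const (Fin A) a) ∈ ℐ := by
    rw [hℐ]
    refine Finset.mem_union_right _ (Finset.mk_mem_product hb ?_)
    exact Finset.mem_image_of_mem _ (Finset.mem_univ a)
  have hsingle : w T (b, Function.const (Fin A) a) ≤ ∑ bψ ∈ ℐ, w T bψ :=
    Finset.single_le_sum (fun i _ => (hwpos T i).le) hin
  have hle := (hsingle.trans (hmono T le_rfl)).trans_eq hW0
  rw [hw, if_pos hb, mul_comm] at hle
  have hexp := le_of_mul_le_mul_right hle (by positivity)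
  have hBpos : (0 : ℝ) < Be.card := by exact_mod_cast hBe.card_pos
  rw [← Real.le_log_iff_exp_le (by positivity)] at hexp
  have hdiv := (le_div_iff₀' hη).2 hexp
  refine le_trans ?_ (add_le_add_right hdiv _)
  rw [Finset.mul_sum, ← Finset.sum_add_distrib]
  refine Finset.sum_le_sum fun t ht => ?_
  obtain ⟨hp0, hp1⟩ := hp t ht
  have hconst : ip (pushf (Function.const (Fin A) a) (p t)) (ℓ t) = ℓ t a := by
    rw [ip_pushf]
    simp only [Function.const_apply]
    rw [← Finset.sum_mul, hp1, one_mul]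
  rw [hconst]
  have hs0 := (hS t ht b (Finset.mem_union_right _ hb)).1
  have hx0 : 0 ≤ ip (p t) (ℓ t) := (avg_mem id _ _ hp0 hp1 (hℓ _ ht)).1
  have hexp1 := Real.add_one_le_exp (-η * supNorm (ℓ t))
  nlinarith [mul_le_mul_of_nonneg_right hexp1 (mul_nonneg hs0 hx0)]
end

section
/- One-step potential monotonicity of wide-range Hedge: let w : ℐ → [0,∞) be arbitrary nonnegative weights, S_b ∈ [0,1] for each b ∈ B^s ∪ B^e, ℓ : 𝒜 → [0,∞) a loss vector, η > 0, and p ∈ Δ(𝒜) a probability vector satisfying the stationarity equation ∑_{(b,ψ)∈ℐ} w(b,ψ)·S_b·p = ∑_{(b,ψ)∈ℐ} w(b,ψ)·S_b·(ψ∘p) (as an equality of vectors in ℝ^A). Then ∑_{(b,ψ)∈ℐ} w(b,ψ)·exp(η·S_b·(exp(−η‖ℓ‖_∞)·⟨p,ℓ⟩ − ⟨ψ∘p,ℓ⟩)) ≤ ∑_{(b,ψ)∈ℐ} w(b,ψ). -/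
/-!
Write `M = ‖ℓ‖_∞`, `L = ⟨p, ℓ⟩`, `q = ⟨ψ∘p, ℓ⟩` and `t = exp (-η M)`. Everything rests on the chord
bound `exp (x y) ≤ 1 + x (exp y - 1)` for `0 ≤ x ≤ 1`, used three times. With `x = S_b` it removes
`S_b` from the exponent. With `x = (L / M) t`, `y = η M`, and with `x = q / M`, `y = -η M`, it gives
`exp (η t L) ≤ 1 + k L` and `exp (-η q) ≤ 1 - k q` for the same `k = (1 - t) / M`. As `L, q ≥ 0`,
the product is at most `1 + k (L - q)`. Hence each term of the potential is at most
`w + k w S_b (L - q)` (`exp_term_le`), and pairing the stationarity equation with `ℓ` shows that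
the sum of the linear corrections vanishes.
-/

open Finset

/-- On `[0, 1]` the convex function `x ↦ exp (x y)` lies below its chord. -/
lemma exp_mul_le_chord {x y : ℝ} (hx0 : 0 ≤ x) (hx1 : x ≤ 1) :
    Real.exp (x * y) ≤ 1 + x * (Real.exp y - 1) := by
  have h := convexOn_exp.2 (Set.mem_univ y) (Set.mem_univ 0) hx0 (sub_nonneg.2 hx1) (by ring)
  simp only [smul_eq_mul, mul_zero, add_zero, Real.exp_zero] at h
  linarith

/-- The linear bound on one exponential term. For `M = 0` both `L` and `q` vanish, so the junk value
of the division is harmless. -/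
lemma exp_term_le {M L q η s : ℝ} (hη : 0 < η) (hL : 0 ≤ L) (hLM : L ≤ M) (hq : 0 ≤ q)
    (hqM : q ≤ M) (hs0 : 0 ≤ s) (hs1 : s ≤ 1) :
    Real.exp (η * s * (Real.exp (-η * M) * L - q))
      ≤ 1 + s * ((1 - Real.exp (-η * M)) / M * (L - q)) := by
  rcases (hL.trans hLM).eq_or_lt with hM | hM
  · obtain rfl : L = 0 := by linarith
    obtain rfl : q = 0 := by linarith
    simp
  set t := Real.exp (-η * M) with ht
  have ht0 : 0 < t := Real.exp_pos _
  have ht1 : t ≤ 1 := Real.exp_le_one_iff.2 (by nlinarith)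
  have hinv : t * Real.exp (η * M) = 1 := by
    rw [ht, ← Real.exp_add]; simp
  have ha0 : 0 ≤ L / M := by positivity
  have ha1 : L / M ≤ 1 := (div_le_one hM).2 hLM
  have hb0 : 0 ≤ q / M := by positivity
  have hb1 : q / M ≤ 1 := (div_le_one hM).2 hqM
  have h1 : Real.exp (η * t * L) ≤ 1 + L / M * (1 - t) := by
    have h := exp_mul_le_chord (x := L / M * t) (y := η * M) (by positivity)
      (mul_le_one₀ ha1 ht0.le ht1)
    have e1 : L / M * t * (η * M) = η * t * L := by field_simp
    have e2 : L / M * t * (Real.exp (η * M) - 1) = L / M * (1 - t) := by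
      linear_combination (L / M) * hinv
    rwa [e1, e2] at h
  have h2 : Real.exp (-η * q) ≤ 1 + q / M * (t - 1) := by
    have h := exp_mul_le_chord (x := q / M) (y := -η * M) hb0 hb1
    have e1 : q / M * (-η * M) = -η * q := by field_simp
    rwa [e1] at h
  have h3 : Real.exp (η * (t * L - q)) ≤ 1 + (1 - t) / M * (L - q) := by
    have e : η * (t * L - q) = η * t * L + -η * q := by ring
    rw [e, Real.exp_add]
    have h := mul_le_mul h1 h2 (Real.exp_pos _).le
      (add_nonneg zero_le_one (mul_nonneg ha0 (sub_nonneg.2 ht1)))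
    have hcross : 0 ≤ L / M * (1 - t) * (q / M * (1 - t)) :=
      mul_nonneg (mul_nonneg ha0 (sub_nonneg.2 ht1)) (mul_nonneg hb0 (sub_nonneg.2 ht1))
    have e2 : (1 - t) / M * (L - q) = L / M * (1 - t) - q / M * (1 - t) := by ring
    rw [e2]
    linarith
  have h4 := exp_mul_le_chord (x := s) (y := η * (t * L - q)) hs0 hs1
  have e : η * s * (t * L - q) = s * (η * (t * L - q)) := by ring
  rw [e]
  have := mul_le_mul_of_nonneg_left h3 hs0
  linarith

lemma pushf_nonneg {A : ℕ} (ψ : Fin A → Fin A) {p : Fin A → ℝ} (hp : ∀ a, 0 ≤ p a) (a : Fin A) :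
    0 ≤ pushf ψ p a :=
  Finset.sum_nonneg fun a' _ => hp a'

lemma sum_pushf {A : ℕ} (ψ : Fin A → Fin A) (p : Fin A → ℝ) : ∑ a, pushf ψ p a = ∑ a, p a :=
  Finset.sum_fiberwise _ _ _

lemma ip_nonneg {A : ℕ} {p ℓ : Fin A → ℝ} (hp : ∀ a, 0 ≤ p a) (hℓ : ∀ a, 0 ≤ ℓ a) :
    0 ≤ ip p ℓ :=
  Finset.sum_nonneg fun a _ => mul_nonneg (hp a) (hℓ a)

lemma ip_le_supNorm {A : ℕ} {p : Fin A → ℝ} (ℓ : Fin A → ℝ) (hp : ∀ a, 0 ≤ p a)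
    (hsum : ∑ a, p a = 1) : ip p ℓ ≤ supNorm ℓ := by
  calc ip p ℓ ≤ ∑ a, p a * supNorm ℓ :=
        Finset.sum_le_sum fun a _ => mul_le_mul_of_nonneg_left
          (le_csSup (Set.finite_range ℓ).bddAbove (Set.mem_range_self a)) (hp a)
    _ = supNorm ℓ := by rw [← Finset.sum_mul, hsum, one_mul]

lemma sum_mul_ip {A : ℕ} {ι : Type*} (I : Finset ι) (c : ι → ℝ) (v : ι → Fin A → ℝ)
    (ℓ : Fin A → ℝ) : ∑ i ∈ I, c i * ip (v i) ℓ = ∑ a, (∑ i ∈ I, c i * v i a) * ℓ a := by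
  simp only [ip, Finset.mul_sum, Finset.sum_mul]
  rw [Finset.sum_comm]
  simp only [mul_assoc]

/-- One-step potential monotonicity of wide-range Hedge: if the probability vector `p`
satisfies the stationarity equation, then the exponential potential does not increase. -/
theorem stmt2
    (A : ℕ) (hA : 1 ≤ A)
    (B : Type) [Fintype B] [DecidableEq B]
    (Bs Be : Finset B) (hdisj : Disjoint Bs Be)
    (hBs : Bs.Nonempty) (hBe : Be.Nonempty)
    (ℐ : Finset (B × (Fin A → Fin A)))
    (hℐ : ℐ = Bs ×ˢ (Finset.univ : Finset (Fin A → Fin A)) ∪ Be ×ˢ PsiE A)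
    (w : B × (Fin A → Fin A) → ℝ) (hw : ∀ bψ ∈ ℐ, 0 ≤ w bψ)
    (S : B → ℝ) (hS : ∀ b ∈ Bs ∪ Be, 0 ≤ S b ∧ S b ≤ 1)
    (ℓ : Fin A → ℝ) (hℓ : ∀ a, 0 ≤ ℓ a)
    (η : ℝ) (hη : 0 < η)
    (p : Fin A → ℝ) (hp : (∀ a, 0 ≤ p a) ∧ ∑ a, p a = 1)
    (hstat : ∀ a : Fin A,
      ∑ bψ ∈ ℐ, w bψ * S bψ.1 * p a = ∑ bψ ∈ ℐ, w bψ * S bψ.1 * pushf bψ.2 p a) :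
    ∑ bψ ∈ ℐ, w bψ *
        Real.exp (η * S bψ.1 * (Real.exp (-η * supNorm ℓ) * ip p ℓ - ip (pushf bψ.2 p) ℓ))
      ≤ ∑ bψ ∈ ℐ, w bψ := by
  obtain ⟨hp0, hp1⟩ := hp
  -- The stationarity equation paired with `ℓ`.
  have hzero : ∑ bψ ∈ ℐ, w bψ * S bψ.1 * ip p ℓ
      = ∑ bψ ∈ ℐ, w bψ * S bψ.1 * ip (pushf bψ.2 p) ℓ := by
    rw [sum_mul_ip ℐ (fun bψ => w bψ * S bψ.1) (fun _ => p) ℓ,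
      sum_mul_ip ℐ (fun bψ => w bψ * S bψ.1) (fun bψ => pushf bψ.2 p) ℓ]
    exact Finset.sum_congr rfl fun a _ => by rw [hstat a]
  have hSI : ∀ bψ ∈ ℐ, 0 ≤ S bψ.1 ∧ S bψ.1 ≤ 1 := by
    intro bψ h
    apply hS
    rw [hℐ, Finset.mem_union, Finset.mem_product, Finset.mem_product] at h
    exact Finset.mem_union.2 (h.imp And.left And.left)
  set k := (1 - Real.exp (-η * supNorm ℓ)) / supNorm ℓ with hk
  calc _ ≤ ∑ bψ ∈ ℐ, w bψ * (1 + S bψ.1 * (k * (ip p ℓ - ip (pushf bψ.2 p) ℓ))) := by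
        refine Finset.sum_le_sum fun bψ h => mul_le_mul_of_nonneg_left ?_ (hw bψ h)
        exact exp_term_le hη (ip_nonneg hp0 hℓ) (ip_le_supNorm ℓ hp0 hp1)
          (ip_nonneg (pushf_nonneg _ hp0) hℓ)
          (ip_le_supNorm ℓ (pushf_nonneg _ hp0) ((sum_pushf _ p).trans hp1))
          (hSI bψ h).1 (hSI bψ h).2
    _ = ∑ bψ ∈ ℐ, w bψ + k * (∑ bψ ∈ ℐ, w bψ * S bψ.1 * ip p ℓ
          - ∑ bψ ∈ ℐ, w bψ * S bψ.1 * ip (pushf bψ.2 p) ℓ) := by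
        rw [← Finset.sum_sub_distrib, Finset.mul_sum, ← Finset.sum_add_distrib]
        exact Finset.sum_congr rfl fun bψ _ => by ring
    _ = ∑ bψ ∈ ℐ, w bψ := by rw [hzero, sub_self, mul_zero, add_zero]
end

section
/- One-step linearized potential bound for stochastic wide-range Hedge: let w : ℐ → [0,∞) be nonnegative weights, η > 0, L̄ > 0, p ∈ Δ(𝒜), and for each b ∈ B^s ∪ B^e let S_b ≥ 0 and let ℓ̃_b : 𝒜 → [0,∞) satisfy S_b·ℓ̃_b(a) ≤ L̄ for every a ∈ 𝒜. Then, with c = (1 − exp(−η·L̄))/L̄, ∑_{(b,ψ)∈ℐ} w(b,ψ)·exp(η·S_b·(exp(−η·L̄)·⟨p, ℓ̃_b⟩ − ⟨ψ∘p, ℓ̃_b⟩)) ≤ ∑_{(b,ψ)∈ℐ} w(b,ψ)·(1 + c·S_b·⟨p, ℓ̃_b⟩ − c·S_b·⟨ψ∘p, ℓ̃_b⟩). -/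
/-!
The inequality holds term by term. Put `x = S_b ⟨p, ℓ̃_b⟩`, `y = S_b ⟨ψ∘p, ℓ̃_b⟩`, both in `[0, L̄]`,
and `u = x / L̄`, `v = y / L̄`, `k = η L̄`, `β = exp (-k)`. Convexity of `exp` on the chord from `0` to
`z` gives `exp (t z) ≤ 1 - t + t exp z` for `t ∈ [0, 1]`. With `(t, z) = (v, -k)` this yields
`exp (-k v) ≤ 1 - (1 - β) v`, and with `(t, z) = (β u, k)` it yields
`exp (k β u) ≤ 1 + (1 - β) u`, since `β exp k = 1`. The product of the two right-hand sides is
`1 + (1 - β) (u - v) - (1 - β)² u v`, and the last term may be dropped.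
-/

open Finset

lemma exp_mul_le_chord_s3 {t : ℝ} (z : ℝ) (h0 : 0 ≤ t) (h1 : t ≤ 1) :
    Real.exp (t * z) ≤ 1 - t + t * Real.exp z := by
  have h := convexOn_exp.2 (Set.mem_univ (0 : ℝ)) (Set.mem_univ z)
    (sub_nonneg.2 h1) h0 (by ring)
  simpa using h

/-- The scalar inequality in normalized variables `u, v ∈ [0, 1]`. -/
lemma exp_le_linear_normalized {k u v : ℝ} (hk : 0 ≤ k) (hu0 : 0 ≤ u) (hu1 : u ≤ 1)
    (hv0 : 0 ≤ v) (hv1 : v ≤ 1) :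
    Real.exp (k * (Real.exp (-k) * u - v)) ≤ 1 + (1 - Real.exp (-k)) * (u - v) := by
  have hβ0 : 0 < Real.exp (-k) := Real.exp_pos _
  have hβ1 : Real.exp (-k) ≤ 1 := Real.exp_le_one_iff.2 (by linarith)
  have hβk : Real.exp (-k) * Real.exp k = 1 := by rw [← Real.exp_add]; simp
  have h1 := exp_mul_le_chord_s3 (-k) hv0 hv1
  have h2 := exp_mul_le_chord_s3 k (mul_nonneg hβ0.le hu0) (mul_le_one₀ hβ1 hu0 hu1)
  have hsplit : Real.exp (k * (Real.exp (-k) * u - v))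
      = Real.exp (Real.exp (-k) * u * k) * Real.exp (v * -k) := by
    rw [← Real.exp_add]; congr 1; ring
  have h3 : 1 - Real.exp (-k) * u + Real.exp (-k) * u * Real.exp k
      = 1 + (1 - Real.exp (-k)) * u := by
    linear_combination u * hβk
  rw [h3] at h2
  rw [hsplit]
  have hprod := mul_le_mul h2 h1 (Real.exp_pos _).le ((Real.exp_pos _).le.trans h2)
  have huv : 0 ≤ (1 - Real.exp (-k)) ^ 2 * (u * v) :=
    mul_nonneg (sq_nonneg _) (mul_nonneg hu0 hv0)
  linarith

lemma scaled_average_mem {A : ℕ} {p f : Fin A → ℝ} {s L : ℝ}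
    (hp : (∀ a, 0 ≤ p a) ∧ ∑ a, p a = 1) (hs : 0 ≤ s)
    (hf : ∀ a, 0 ≤ f a ∧ s * f a ≤ L) :
    0 ≤ s * ∑ a, p a * f a ∧ s * ∑ a, p a * f a ≤ L := by
  refine ⟨mul_nonneg hs (Finset.sum_nonneg fun a _ => mul_nonneg (hp.1 a) (hf a).1), ?_⟩
  calc s * ∑ a, p a * f a = ∑ a, p a * (s * f a) := by
        rw [Finset.mul_sum]; exact Finset.sum_congr rfl fun a _ => by ring
    _ ≤ ∑ a, p a * L := Finset.sum_le_sum fun a _ => mul_le_mul_of_nonneg_left (hf a).2 (hp.1 a)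
    _ = L := by rw [← Finset.sum_mul, hp.2, one_mul]

/-- One-step linearized potential bound for stochastic wide-range Hedge, with
`c = (1 − exp(−η·Lbar))/Lbar`. -/
theorem stmt3
    (A : ℕ) (hA : 1 ≤ A)
    (B : Type) [Fintype B] [DecidableEq B]
    (Bs Be : Finset B) (hdisj : Disjoint Bs Be)
    (hBs : Bs.Nonempty) (hBe : Be.Nonempty)
    (ℐ : Finset (B × (Fin A → Fin A)))
    (hℐ : ℐ = Bs ×ˢ (Finset.univ : Finset (Fin A → Fin A)) ∪ Be ×ˢ PsiE A)
    (w : B × (Fin A → Fin A) → ℝ) (hw : ∀ bψ ∈ ℐ, 0 ≤ w bψ)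
    (η Lbar : ℝ) (hη : 0 < η) (hL : 0 < Lbar)
    (p : Fin A → ℝ) (hp : (∀ a, 0 ≤ p a) ∧ ∑ a, p a = 1)
    (S : B → ℝ) (hS : ∀ b ∈ Bs ∪ Be, 0 ≤ S b)
    (ℓt : B → Fin A → ℝ)
    (hℓt : ∀ b ∈ Bs ∪ Be, ∀ a, 0 ≤ ℓt b a ∧ S b * ℓt b a ≤ Lbar) :
    ∑ bψ ∈ ℐ, w bψ *
        Real.exp (η * S bψ.1 *
          (Real.exp (-η * Lbar) * ip p (ℓt bψ.1) - ip (pushf bψ.2 p) (ℓt bψ.1)))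
      ≤ ∑ bψ ∈ ℐ, w bψ *
          (1 + (1 - Real.exp (-η * Lbar)) / Lbar * S bψ.1 * ip p (ℓt bψ.1)
            - (1 - Real.exp (-η * Lbar)) / Lbar * S bψ.1 * ip (pushf bψ.2 p) (ℓt bψ.1)) := by
  refine Finset.sum_le_sum fun bψ hmem => mul_le_mul_of_nonneg_left ?_ (hw bψ hmem)
  have hb : bψ.1 ∈ Bs ∪ Be := by
    rw [hℐ] at hmem
    simp only [Finset.mem_union, Finset.mem_product] at hmem ⊢
    tauto
  obtain ⟨hx0, hx1⟩ := scaled_average_mem hp (hS _ hb) (hℓt _ hb)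
  obtain ⟨hy0, hy1⟩ := scaled_average_mem (f := fun a => ℓt bψ.1 (bψ.2 a)) hp (hS _ hb)
    (fun a => hℓt _ hb (bψ.2 a))
  rw [← ip_pushf] at hy0 hy1
  change 0 ≤ S bψ.1 * ip p (ℓt bψ.1) at hx0
  change S bψ.1 * ip p (ℓt bψ.1) ≤ Lbar at hx1
  have h := exp_le_linear_normalized (mul_pos hη hL).le
    (div_nonneg hx0 hL.le) ((div_le_one hL).2 hx1)
    (div_nonneg hy0 hL.le) ((div_le_one hL).2 hy1)
  rw [← neg_mul] at h
  generalize Real.exp (-η * Lbar) = β at h ⊢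
  have hL' := hL.ne'
  refine (le_of_eq ?_).trans (h.trans (le_of_eq ?_))
  · refine congrArg Real.exp ?_
    field_simp
  · field_simp
    ring
end
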